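/- Let T be a tree on n ≥ 3 vertices with exactly p pendant vertices. Then there exists a set B of 2-element subsets of the vertex set with |B| = 2(n − p) such that the rows of Max4PC_T indexed by B form a basis of the row space of Max4PC_T over the rationals, and the determinant of the principal submatrix Max4PC_T[B,B] (rows and columns restricted to B) equals (−1)^{n−p} · 2^{2(n−p−1)}. -/

import Mathlib

open SimpleGraph

variable {V : Type*}

/-- The maximum of the three four-point sums for vertices `w, x, y, z`:
`max (d w x + d y z) (max (d w y + d x z) (d w z + d x y))`.
This is the entry of the matrix `Max4PC` in row `{w,x}` and column `{y,z}`. -/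
noncomputable def max4 (G : SimpleGraph V) (w x y z : V) : ℕ :=
  max (G.dist w x + G.dist y z) (max (G.dist w y + G.dist x z) (G.dist w z + G.dist x y))

/-- The `Max4PC` entry as a symmetric function of two unordered pairs. -/
noncomputable def max4Sym2 (G : SimpleGraph V) : Sym2 V → Sym2 V → ℕ :=
  Sym2.lift₂ ⟨fun w x y z => max4 G w x y z, by
    intro a₁ a₂ b₁ b₂
    simp only [max4]
    constructor
    · rw [show G.dist a₂ a₁ = G.dist a₁ a₂ from G.dist_comm]
      omega
    · rw [show G.dist b₂ b₁ = G.dist b₁ b₂ from G.dist_comm]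
      omega⟩

/-- The matrix `Max4PC_T`, with rows and columns indexed by the 2-element
subsets of the vertex set (non-diagonal elements of `Sym2 V`), over `ℚ`. -/
noncomputable def max4Matrix [Fintype V] [DecidableEq V] (G : SimpleGraph V) :
    Matrix {s : Sym2 V // ¬ s.IsDiag} {s : Sym2 V // ¬ s.IsDiag} ℚ :=
  fun p q => (max4Sym2 G p.1 q.1 : ℚ)

/-- `p` is a parent function for the tree `G` rooted at `r`. -/
structure IsParent {V : Type*} (G : SimpleGraph V) (r : V) (p : V → V) : Prop where
  root : p r = r
  adj : ∀ x, x ≠ r → G.Adj x (p x)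
  depth : ∀ x, x ≠ r → G.dist r (p x) + 1 = G.dist r x
  edge : ∀ x y, G.Adj x y → (y = p x ∧ x ≠ r) ∨ (x = p y ∧ y ≠ r)

theorem exists_isParent {V : Type*} [Fintype V] [DecidableEq V]
    (G : SimpleGraph V) [DecidableRel G.Adj] (hT : G.IsTree) (r : V) :
    ∃ p, IsParent G r p := by
  have h1 : ∀ x, ∃ y, (x = r → y = r) ∧ (x ≠ r → G.Adj x y ∧ G.dist r y + 1 = G.dist r x) := by
    intro x
    by_cases hx : x = r
    · exact ⟨r, by simp [hx]⟩
    · obtain ⟨w, hw⟩ := hT.connected.exists_walk_length_eq_dist x r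
      cases w with
      | nil => exact absurd rfl hx
      | @cons _ y _ h w =>
        refine ⟨y, fun h => absurd h hx, fun _ => ⟨h, ?_⟩⟩
        have h2 := SimpleGraph.dist_le w
        have h3 := hT.connected.dist_triangle (u := r) (v := y) (w := x)
        have h4 : G.dist y x = 1 := SimpleGraph.dist_eq_one_iff_adj.2 h.symm
        rw [SimpleGraph.Walk.length_cons] at hw
        rw [G.dist_comm (u := y) (v := r)] at h2
        rw [G.dist_comm (u := x) (v := r)] at hw
        omega
  choose p hp using h1
  refine ⟨p, (hp r).1 rfl, fun x hx => ((hp x).2 hx).1, fun x hx => ((hp x).2 hx).2, ?_⟩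
  have hinj : Set.InjOn (fun x => s(x, p x)) ((Finset.univ.erase r : Finset V) : Set V) := by
    intro x hx y hy hxy
    have hx' := ((hp x).2 (by simpa using hx)).2
    have hy' := ((hp y).2 (by simpa using hy)).2
    simp only [Sym2.eq_iff] at hxy
    rcases hxy with h | ⟨h, h'⟩
    · exact h.1
    · rw [h'] at hx'
      rw [← h] at hy'
      omega
  have hcard := hT.card_edgeFinset
  have himg : (Finset.univ.erase r).image (fun x => s(x, p x)) = G.edgeFinset := by
    apply Finset.eq_of_subset_of_card_le
    · intro e he
      simp only [Finset.mem_image, Finset.mem_erase] at he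
      obtain ⟨x, hx, rfl⟩ := he
      simpa using ((hp x).2 hx.1).1
    · rw [Finset.card_image_of_injOn hinj, Finset.card_erase_of_mem (Finset.mem_univ _),
        Finset.card_univ]
      omega
  intro x y hxy
  have : s(x, y) ∈ G.edgeFinset := by simpa using hxy
  rw [← himg] at this
  simp only [Finset.mem_image, Finset.mem_erase, Sym2.eq_iff] at this
  obtain ⟨z, hz, h | h⟩ := this
  · left; obtain ⟨rfl, rfl⟩ := h; exact ⟨rfl, hz.1⟩
  · right; obtain ⟨rfl, rfl⟩ := h; exact ⟨rfl, hz.1⟩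

/-- ancestor relation -/
def Anc {V : Type*} (p : V → V) (v x : V) : Prop := ∃ i : ℕ, p^[i] x = v

theorem Anc.refl {V : Type*} (p : V → V) (v : V) : Anc p v v := ⟨0, rfl⟩

theorem Anc.trans {V : Type*} {p : V → V} {u v x : V} (h : Anc p u v) (h' : Anc p v x) :
    Anc p u x := by
  obtain ⟨i, rfl⟩ := h
  obtain ⟨j, rfl⟩ := h'
  exact ⟨i + j, by rw [Function.iterate_add_apply]⟩

theorem Anc.laminar {V : Type*} {p : V → V} {u v x : V} (h : Anc p u x) (h' : Anc p v x) :
    Anc p u v ∨ Anc p v u := by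
  obtain ⟨i, rfl⟩ := h
  obtain ⟨j, rfl⟩ := h'
  rcases le_total i j with hij | hij
  · right; exact ⟨j - i, by rw [← Function.iterate_add_apply]; congr 2; omega⟩
  · left; exact ⟨i - j, by rw [← Function.iterate_add_apply]; congr 2; omega⟩

theorem anc_iff {V : Type*} {p : V → V} {v x : V} : Anc p v x ↔ v = x ∨ Anc p v (p x) := by
  constructor
  · rintro ⟨i, hi⟩
    cases i with
    | zero => left; exact hi.symm
    | succ i => right; exact ⟨i, by simpa using hi⟩
  · rintro (rfl | ⟨i, hi⟩)
    · exact Anc.refl _ _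
    · exact ⟨i + 1, by simpa using hi⟩

namespace IsParent
variable {V : Type*} {G : SimpleGraph V} {r : V} {p : V → V}

theorem anc_depth (h : IsParent G r p) {v x : V} (hv : Anc p v x) :
    G.dist r v ≤ G.dist r x := by
  obtain ⟨i, rfl⟩ := hv
  induction i with
  | zero => simp
  | succ i ih =>
    rw [Function.iterate_succ_apply']
    refine le_trans ?_ ih
    by_cases hx : p^[i] x = r
    · rw [hx, h.root]
    · have := h.depth _ hx; omega

theorem not_anc_parent (h : IsParent G r p) {x : V} (hx : x ≠ r) : ¬ Anc p x (p x) := by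
  intro h1
  have := h.anc_depth h1
  have := h.depth x hx
  omega

theorem parent_ne (h : IsParent G r p) {x : V} (hx : x ≠ r) : p x ≠ x := by
  intro h1
  have := h.depth x hx
  rw [h1] at this
  omega

theorem anc_root (h : IsParent G r p) {v : V} (hv : Anc p v r) : v = r := by
  obtain ⟨i, rfl⟩ := hv
  induction i with
  | zero => rfl
  | succ i ih => rw [Function.iterate_succ_apply', ih, h.root]

theorem root_anc (h : IsParent G r p) (x : V) : Anc p r x := by
  generalize hd : G.dist r x = d
  induction d generalizing x with
  | zero =>
    by_cases hx : x = r
    · rw [hx]; exact Anc.refl _ _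
    · have := h.depth x hx; omega
  | succ d ih =>
    by_cases hx : x = r
    · rw [hx]; exact Anc.refl _ _
    · have := h.depth x hx
      exact anc_iff.2 (Or.inr (ih _ (by omega)))

variable [Fintype V]

open scoped Classical in
theorem dist_eq (h : IsParent G r p) (hc : G.Connected) (x y : V) :
    G.dist x y = ∑ v, if (Anc p v x ↔ Anc p v y) then 0 else 1 := by
  have key : ∀ x, x ≠ r → ∀ y, ¬ Anc p x y →
      (∑ v, if (Anc p v x ↔ Anc p v y) then 0 else 1) =
      (∑ v, if (Anc p v (p x) ↔ Anc p v y) then 0 else 1) + 1 := by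
    intro x hx y hxy
    have : (1 : ℕ) = ∑ v, if v = x then 1 else 0 := by simp
    rw [this, ← Finset.sum_add_distrib]
    refine Finset.sum_congr rfl fun v _ => ?_
    by_cases hv : v = x
    · subst hv
      simp [h.not_anc_parent hx, hxy, Anc.refl]
    · rw [anc_iff (x := x)]
      simp [hv]
  apply le_antisymm
  · generalize hd : G.dist r x + G.dist r y = d
    induction d using Nat.strong_induction_on generalizing x y with
    | _ d ih =>
      have main : ∀ x y, G.dist r x + G.dist r y = d → x ≠ y → G.dist r y ≤ G.dist r x →
          G.dist x y ≤ ∑ v, if (Anc p v x ↔ Anc p v y) then 0 else 1 := by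
        intro x y hd hxy hle
        have hx : x ≠ r := by
          rintro rfl
          have hy := h.depth y (Ne.symm hxy)
          simp only [SimpleGraph.dist_self] at hle
          omega
        have hn : ¬ Anc p x y := by
          intro ha
          rcases anc_iff.1 ha with e | e
          · exact hxy e
          · have h1 := h.anc_depth e
            by_cases hy : y = r
            · subst hy; rw [h.root] at e; exact hxy (h.anc_root e)
            · have := h.depth y hy; omega
        rw [key x hx y hn]
        have h1 := h.depth x hx
        have h2 := ih _ (by omega) (p x) y rfl
        have h3 := hc.dist_triangle (u := x) (v := p x) (w := y)
        have h4 : G.dist x (p x) = 1 := SimpleGraph.dist_eq_one_iff_adj.2 (h.adj x hx)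
        omega
      by_cases hxy : x = y
      · subst hxy; simp
      · rcases le_total (G.dist r y) (G.dist r x) with hle | hle
        · exact main x y hd hxy hle
        · have := main y x (by omega) (Ne.symm hxy) hle
          rw [G.dist_comm]
          refine this.trans (le_of_eq (Finset.sum_congr rfl fun v _ => ?_))
          simp [iff_comm]
  · obtain ⟨w, hw⟩ := hc.exists_walk_length_eq_dist x y
    rw [← hw]
    clear hw
    induction w with
    | nil => simp
    | @cons a b c hab w ih =>
      rw [SimpleGraph.Walk.length_cons]
      rcases h.edge a b hab with ⟨rfl, ha⟩ | ⟨rfl, hb⟩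
      · have h1 : (∑ v, if (Anc p v a ↔ Anc p v c) then 0 else 1) ≤
            (∑ v, if (Anc p v (p a) ↔ Anc p v c) then 0 else 1) + ∑ v, if v = a then 1 else 0 := by
          rw [← Finset.sum_add_distrib]
          refine Finset.sum_le_sum fun v _ => ?_
          by_cases hv : v = a
          · simp only [hv, if_true]; split_ifs <;> omega
          · rw [anc_iff (x := a)]; simp [hv]
        simp only [Finset.sum_ite_eq', Finset.mem_univ, if_true] at h1
        omega
      · have h1 : (∑ v, if (Anc p v (p b) ↔ Anc p v c) then 0 else 1) ≤
            (∑ v, if (Anc p v b ↔ Anc p v c) then 0 else 1) + ∑ v, if v = b then 1 else 0 := by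
          rw [← Finset.sum_add_distrib]
          refine Finset.sum_le_sum fun v _ => ?_
          by_cases hv : v = b
          · simp only [hv, if_true]; split_ifs <;> omega
          · rw [anc_iff (x := b)]; simp [hv]
        simp only [Finset.sum_ite_eq', Finset.mem_univ, if_true] at h1
        omega

open scoped Classical in
/-- number of vertices whose subtree separates `{w,x}` from `{y,z}`. -/
noncomputable def nsep (p : V → V) (w x y z : V) : ℕ :=
  ∑ v, if ((Anc p v w ∧ Anc p v x ∧ ¬ Anc p v y ∧ ¬ Anc p v z) ∨
    (¬ Anc p v w ∧ ¬ Anc p v x ∧ Anc p v y ∧ Anc p v z)) then 1 else 0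

open scoped Classical in
theorem max4_eq (h : IsParent G r p) (hc : G.Connected) (w x y z : V) :
    max4 G w x y z = G.dist w x + G.dist y z + 2 * nsep p w x y z := by
  have e1 : G.dist w x + G.dist y z + 2 * nsep p w x y z =
      G.dist w y + G.dist x z + 2 * nsep p w y x z := by
    simp only [h.dist_eq hc, nsep, Finset.mul_sum, ← Finset.sum_add_distrib]
    refine Finset.sum_congr rfl fun v _ => ?_
    by_cases h1 : Anc p v w <;> by_cases h2 : Anc p v x <;> by_cases h3 : Anc p v y <;>
      by_cases h4 : Anc p v z <;> simp [h1, h2, h3, h4]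
  have e2 : G.dist w x + G.dist y z + 2 * nsep p w x y z =
      G.dist w z + G.dist x y + 2 * nsep p w z x y := by
    simp only [h.dist_eq hc, nsep, Finset.mul_sum, ← Finset.sum_add_distrib]
    refine Finset.sum_congr rfl fun v _ => ?_
    by_cases h1 : Anc p v w <;> by_cases h2 : Anc p v x <;> by_cases h3 : Anc p v y <;>
      by_cases h4 : Anc p v z <;> simp [h1, h2, h3, h4]
  have e3 : nsep p w x y z = 0 ∨ nsep p w y x z = 0 := by
    by_contra hcon
    push Not at hcon
    obtain ⟨h1, h2⟩ := hcon
    obtain ⟨u, _, hu⟩ := Finset.exists_ne_zero_of_sum_ne_zero h1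
    obtain ⟨v, _, hv⟩ := Finset.exists_ne_zero_of_sum_ne_zero h2
    have hu' := (ite_ne_right_iff.1 hu).1
    have hv' := (ite_ne_right_iff.1 hv).1
    have L : ∀ t, Anc p u t → Anc p v t → Anc p u v ∨ Anc p v u := fun t a b => a.laminar b
    have T1 : Anc p u v → ∀ t, Anc p v t → Anc p u t := fun a t b => a.trans b
    have T2 : Anc p v u → ∀ t, Anc p u t → Anc p v t := fun a t b => a.trans b
    rcases hu' with ⟨u1, u2, u3, u4⟩ | ⟨u1, u2, u3, u4⟩ <;>
      rcases hv' with ⟨v1, v2, v3, v4⟩ | ⟨v1, v2, v3, v4⟩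
    · rcases L w u1 v1 with a | a
      · exact u3 (T1 a y v2)
      · exact v3 (T2 a x u2)
    · rcases L x u2 v3 with a | a
      · exact u4 (T1 a z v4)
      · exact v1 (T2 a w u1)
    · rcases L y u3 v2 with a | a
      · exact u1 (T1 a w v1)
      · exact v4 (T2 a z u4)
    · rcases L z u4 v4 with a | a
      · exact u2 (T1 a x v3)
      · exact v2 (T2 a y u3)
  unfold max4
  omega

end IsParent

theorem exists_basis_aux {P J : Type*} [Fintype P] [DecidableEq P] [Fintype J] [DecidableEq J]
    (M : Matrix P P ℚ) (φ : J → P) (C : Matrix P J ℚ) (D : Matrix J J ℚ)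
    (hM : M = C * D * C.transpose) (hD : D.det ≠ 0)
    (hC : (C.submatrix φ id).det ^ 2 = 1) :
    ∃ B : Finset P, B.card = Fintype.card J ∧
      LinearIndependent ℚ (fun b : ↥B => M b.1) ∧
      Submodule.span ℚ (Set.range (fun b : ↥B => M b.1)) =
        Submodule.span ℚ (Set.range (fun s => M s)) ∧
      (M.submatrix (fun b : ↥B => b.1) (fun b : ↥B => b.1)).det = D.det := by
  set A := C.submatrix φ id with hA
  have hsub : M.submatrix φ φ = A * D * A.transpose := by
    ext i j
    simp [hM, hA, Matrix.mul_apply]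
  have hdet : (M.submatrix φ φ).det = D.det := by
    rw [hsub, Matrix.det_mul, Matrix.det_mul, Matrix.det_transpose]
    linear_combination D.det * hC
  have hli0 : LinearIndependent ℚ (M.submatrix φ φ).row :=
    Matrix.linearIndependent_rows_of_det_ne_zero (hdet.trans_ne hD)
  have hli : LinearIndependent ℚ (fun i => M (φ i)) := by
    apply LinearIndependent.of_comp (LinearMap.funLeft ℚ ℚ φ)
    exact hli0
  have hinj : Function.Injective φ := by
    intro i j hij
    exact hli.injective (by simp [hij])
  let B : Finset P := Finset.univ.image φ
  let e : J ≃ ↥B := Equiv.ofBijective (fun i => ⟨φ i, Finset.mem_image_of_mem _ (Finset.mem_univ _)⟩)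
    ⟨fun i j hij => hinj (by simpa using hij), fun ⟨b, hb⟩ => by
      obtain ⟨i, _, rfl⟩ := Finset.mem_image.1 hb
      exact ⟨i, rfl⟩⟩
  refine ⟨B, ?_, ?_, ?_, ?_⟩
  · rw [Finset.card_image_of_injective _ hinj, Finset.card_univ]
  · rw [← linearIndependent_equiv e]
    exact hli
  · apply le_antisymm
    · apply Submodule.span_mono
      rintro _ ⟨b, rfl⟩
      exact ⟨b.1, rfl⟩
    · rw [Submodule.span_le]
      rintro _ ⟨s, rfl⟩
      have hu : IsUnit A.det := by
        rw [isUnit_iff_ne_zero]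
        intro h0
        rw [h0] at hC
        norm_num at hC
      have h1 : M s = Matrix.vecMul (Matrix.vecMul (C s) A⁻¹) (M.submatrix φ id) := by
        have h2 : M.submatrix φ id = A * (D * C.transpose) := by
          ext i j
          simp [hM, hA, Matrix.mul_assoc, Matrix.mul_apply]
        rw [h2, ← Matrix.vecMul_vecMul, Matrix.vecMul_vecMul (C s), Matrix.nonsing_inv_mul _ hu,
          Matrix.vecMul_one, hM, Matrix.mul_assoc]
        rfl
      change M s ∈ _
      rw [h1, Matrix.vecMul_eq_sum]
      refine Submodule.sum_mem _ fun i _ => Submodule.smul_mem _ _ (Submodule.subset_span ?_)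
      exact ⟨e i, rfl⟩
  · rw [← hdet, ← Matrix.det_submatrix_equiv_self e]
    rfl

theorem det_antidiag {I : Type*} [Fintype I] [DecidableEq I] (W : Matrix I I ℚ) :
    (Matrix.fromBlocks 0 W W 0).det = (-1) ^ Fintype.card I * W.det ^ 2 := by
  have hJ : (Matrix.fromBlocks 0 1 1 0 : Matrix (I ⊕ I) (I ⊕ I) ℚ).det =
      (-1) ^ Fintype.card I := by
    have h1 : (Matrix.fromBlocks 0 1 1 0 : Matrix (I ⊕ I) (I ⊕ I) ℚ) *
        Matrix.fromBlocks 1 0 1 1 = Matrix.fromBlocks 1 1 1 0 := by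
      simp [Matrix.fromBlocks_multiply]
    have h2 := congrArg Matrix.det h1
    rw [Matrix.det_mul, Matrix.det_fromBlocks_zero₁₂, Matrix.det_fromBlocks_one₁₁] at h2
    simpa [Matrix.det_neg] using h2
  have h3 : Matrix.fromBlocks 0 W W 0 = Matrix.fromBlocks W 0 0 W * Matrix.fromBlocks 0 1 1 0 := by
    simp [Matrix.fromBlocks_multiply]
  rw [h3, Matrix.det_mul, Matrix.det_fromBlocks_zero₁₂, hJ]
  ring

theorem det_sq_of_inj {J : Type*} [Fintype J] [DecidableEq J] (C : Matrix J J ℤ)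
    (h : ∀ q : ℕ, q.Prime → ∀ v : J → ZMod q,
      (C.map (Int.cast : ℤ → ZMod q)).mulVec v = 0 → v = 0) :
    C.det ^ 2 = 1 := by
  have h1 : C.det.natAbs = 1 := by
    by_contra hne
    obtain ⟨q, hq, hdvd⟩ := Nat.exists_prime_and_dvd hne
    have := Fact.mk hq
    have h2 : (C.map (Int.cast : ℤ → ZMod q)).det = 0 := by
      have : (C.map (Int.cast : ℤ → ZMod q)).det = ((C.det : ℤ) : ZMod q) :=
        (Int.cast_det C).symm
      rw [this, ZMod.intCast_zmod_eq_zero_iff_dvd]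
      exact Int.natCast_dvd.2 hdvd
    obtain ⟨v, hv, hv'⟩ := Matrix.exists_mulVec_eq_zero_iff.2 h2
    exact hv (h q hq v hv')
  rcases Int.natAbs_eq C.det with e | e <;> rw [e, h1] <;> norm_num

namespace IsParent
variable {V : Type*} {G : SimpleGraph V} {r : V} {p : V → V} [Fintype V] [DecidableRel G.Adj]

theorem leaf_no_child (h : IsParent G r p) {v x : V} (hv : G.degree v = 1) (hvr : v ≠ r)
    (hx : x ≠ r) : p x ≠ v := by
  rintro rfl
  obtain ⟨u, hu, huu⟩ := SimpleGraph.degree_eq_one_iff_existsUnique_adj.1 hv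
  have h1 : x = u := huu _ (h.adj x hx).symm
  have h2 : p (p x) = u := huu _ (h.adj _ hvr)
  have h3 := h.depth x hx
  have h4 := h.depth _ hvr
  rw [h2, ← h1] at h4
  omega

theorem leaf_anc (h : IsParent G r p) {v x : V} (hv : G.degree v = 1) (hvr : v ≠ r)
    (ha : Anc p v x) : x = v := by
  obtain ⟨i, hi⟩ := ha
  cases i with
  | zero => exact hi
  | succ i =>
    rw [Function.iterate_succ_apply'] at hi
    by_cases hx : p^[i] x = r
    · rw [hx, h.root] at hi; exact absurd hi.symm hvr
    · exact absurd hi (h.leaf_no_child hv hvr hx)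

theorem exists_child (h : IsParent G r p) {v : V} (hv : G.degree v ≠ 1) (hvr : v ≠ r) :
    ∃ c, c ≠ r ∧ p c = v := by
  by_contra hcon
  push Not at hcon
  apply hv
  rw [SimpleGraph.degree_eq_one_iff_existsUnique_adj]
  refine ⟨p v, h.adj v hvr, fun y hy => ?_⟩
  rcases h.edge v y hy with ⟨e, _⟩ | ⟨e, hy⟩
  · exact e
  · exact absurd e.symm (hcon y hy)

theorem exists_top (h : IsParent G r p) (hr : G.degree r = 1) (h3 : 3 ≤ Fintype.card V) :
    ∃ r', r' ≠ r ∧ p r' = r ∧ G.degree r' ≠ 1 ∧ (∀ x, x ≠ r → Anc p r' x) ∧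
      ∀ x, x ≠ r → x ≠ r' → p x ≠ r ∧ G.degree (p x) ≠ 1 := by
  obtain ⟨r', hr', hu⟩ := SimpleGraph.degree_eq_one_iff_existsUnique_adj.1 hr
  have h1 : r' ≠ r := hr'.ne'
  have h2 : ∀ x, x ≠ r → p x = r → x = r' := fun x hx hpx => hu x (by
    have := h.adj x hx
    rw [hpx] at this
    exact this.symm)
  have h4 : ∀ x, x ≠ r → Anc p r' x := by
    intro x hx
    generalize hd : G.dist r x = d
    induction d generalizing x with
    | zero => have := h.depth x hx; omega
    | succ d ih =>
      by_cases hpx : p x = r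
      · rw [h2 x hx hpx]; exact Anc.refl _ _
      · have := h.depth x hx
        exact anc_iff.2 (Or.inr (ih _ hpx (by omega)))
  have h5 : p r' = r := by
    rcases h.edge r r' hr' with ⟨_, e⟩ | ⟨e, _⟩
    · exact absurd rfl e
    · exact e.symm
  refine ⟨r', h1, h5, ?_, h4, ?_⟩
  · intro hd
    have h6 : ∀ x, x ≠ r → x = r' := fun x hx => h.leaf_anc hd h1 (h4 x hx)
    classical
    have h7 : (Finset.univ : Finset V) ⊆ {r, r'} := by
      intro x _
      by_cases hx : x = r
      · simp [hx]
      · simp [h6 x hx]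
    have h8 := (Finset.card_le_card h7).trans Finset.card_le_two
    rw [Finset.card_univ] at h8
    omega
  · intro x hx hx'
    have h6 : p x ≠ r := fun e => hx' (h2 x hx e)
    exact ⟨h6, fun hd => h.leaf_no_child hd h6 hx rfl⟩

end IsParent

open scoped Classical in
/-- coordinate vector of a pair -/
noncomputable def cvec {V : Type*} [Fintype V] (G : SimpleGraph V) [DecidableRel G.Adj]
    (p : V → V) (r' : V) (s : Sym2 V) :
    {v : V // G.degree v ≠ 1} ⊕ {v : V // G.degree v ≠ 1} → ℤ
  | Sum.inl v => if v.1 = r' then 1 else if ∀ x ∈ s, Anc p v.1 x then 1 else 0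
  | Sum.inr v => if v.1 = r' then
      ((Sym2.lift ⟨fun x y => G.dist x y, fun _ _ => G.dist_comm⟩ s : ℕ) : ℤ)
      else if ∀ x ∈ s, ¬ Anc p v.1 x then 1 else 0

open scoped Classical in
theorem max4Sym2_eq {V : Type*} [Fintype V] {G : SimpleGraph V} [DecidableRel G.Adj]
    {r r' : V} {p : V → V} (h : IsParent G r p) (hc : G.Connected) (hr : G.degree r = 1)
    (hr' : G.degree r' ≠ 1)
    (htop : ∀ x, x ≠ r → Anc p r' x) (s t : Sym2 V) (hs : ¬ s.IsDiag) (ht : ¬ t.IsDiag) :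
    (max4Sym2 G s t : ℤ) = ∑ v : {v : V // G.degree v ≠ 1}, (if v.1 = r' then 1 else 2) *
      (cvec G p r' s (Sum.inl v) * cvec G p r' t (Sum.inr v) +
       cvec G p r' s (Sum.inr v) * cvec G p r' t (Sum.inl v)) := by
  induction s using Sym2.ind with | _ w x
  induction t using Sym2.ind with | _ y z
  simp only [Sym2.mk_isDiag_iff] at hs ht
  have e1 : max4Sym2 G s(w, x) s(y, z) = max4 G w x y z := rfl
  rw [e1, h.max4_eq hc]
  set f : V → ℤ := fun v => if ((Anc p v w ∧ Anc p v x ∧ ¬ Anc p v y ∧ ¬ Anc p v z) ∨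
    (¬ Anc p v w ∧ ¬ Anc p v x ∧ Anc p v y ∧ Anc p v z)) then 1 else 0 with hf
  have e2 : (IsParent.nsep p w x y z : ℤ) = ∑ v : {v : V // G.degree v ≠ 1}, f v := by
    have e3 : (IsParent.nsep p w x y z : ℤ) = ∑ v, f v := by
      simp [IsParent.nsep, hf]
    rw [e3]
    refine Eq.trans (Finset.sum_filter_of_ne (p := fun v => G.degree v ≠ 1) ?_).symm
      (Finset.sum_subtype _ (by simp) f)
    intro v _ hv hd
    apply hv
    simp only [hf]
    rw [if_neg]
    by_cases hvr : v = r
    · subst hvr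
      simp [h.root_anc]
    · rintro (⟨a, b, _, _⟩ | ⟨_, _, a, b⟩)
      · exact hs ((h.leaf_anc hd hvr a).trans (h.leaf_anc hd hvr b).symm)
      · exact ht ((h.leaf_anc hd hvr a).trans (h.leaf_anc hd hvr b).symm)
  have e4 : ∀ v : {v : V // G.degree v ≠ 1}, (if v.1 = r' then 1 else 2) *
      (cvec G p r' s(w, x) (Sum.inl v) * cvec G p r' s(y, z) (Sum.inr v) +
       cvec G p r' s(w, x) (Sum.inr v) * cvec G p r' s(y, z) (Sum.inl v)) =
      (if v = ⟨r', hr'⟩ then (G.dist w x + G.dist y z : ℤ) else 0) + 2 * f v := by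
    intro v
    by_cases hv : v.1 = r'
    · have hv' : v = ⟨r', hr'⟩ := Subtype.ext hv
      have h0 : f v = 0 := by
        simp only [hf, hv]
        rw [if_neg]
        rintro (⟨_, _, a, b⟩ | ⟨a, b, _, _⟩)
        · exact ht ((not_imp_comm.1 (htop y) a).trans (not_imp_comm.1 (htop z) b).symm)
        · exact hs ((not_imp_comm.1 (htop w) a).trans (not_imp_comm.1 (htop x) b).symm)
      rw [h0]
      simp [cvec, hv']
      ring
    · have hv' : v ≠ ⟨r', hr'⟩ := fun e => hv (congrArg Subtype.val e)
      simp only [cvec, hv, hv', if_false, hf, Sym2.mem_iff, forall_eq_or_imp, forall_eq]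
      by_cases h1 : Anc p v w <;> by_cases h2 : Anc p v x <;> by_cases h3 : Anc p v y <;>
        by_cases h4 : Anc p v z <;> simp [h1, h2, h3, h4]
  rw [Finset.sum_congr rfl fun v _ => e4 v, Finset.sum_add_distrib, ← Finset.mul_sum, ← e2]
  simp

open scoped Classical in
theorem inj_aux {V : Type*} [Fintype V] {G : SimpleGraph V} [DecidableRel G.Adj]
    {r r' l : V} {p : V → V} (h : IsParent G r p) (hr : G.degree r = 1)
    (hr' : G.degree r' ≠ 1) (hrr : p r' = r)
    (htop : ∀ x, x ≠ r → Anc p r' x)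
    (hpar : ∀ x, x ≠ r → x ≠ r' → p x ≠ r ∧ G.degree (p x) ≠ 1)
    (hl : G.degree l = 1) (hlr : l ≠ r) (c : V → V)
    (hcc : ∀ v, G.degree v ≠ 1 → p (c v) = v)
    {K : Type*} [CommRing K] (α β : {v : V // G.degree v ≠ 1} → K)
    (g : Sym2 V → K)
    (hg : ∀ s, g s = ∑ v, (cvec G p r' s (Sum.inl v) : K) * α v +
      ∑ v, (cvec G p r' s (Sum.inr v) : K) * β v)
    (h1 : ∀ w, G.degree w ≠ 1 → g s(r, w) = 0)
    (h2 : g s(r, l) = 0)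
    (h3 : ∀ v, G.degree v ≠ 1 → v ≠ r' → g s(v, c v) = 0) : α = 0 ∧ β = 0 := by
  have hI : ∀ v : {v : V // G.degree v ≠ 1}, v.1 ≠ r := fun v e => v.2 (by rw [e, hr])
  have hA : ∀ v : {v : V // G.degree v ≠ 1}, ¬ Anc p v.1 r := fun v e => hI v (h.anc_root e)
  have step : ∀ x, x ≠ r → x ≠ r' → g s(r, x) = g s(r, p x) + β ⟨r', hr'⟩ -
      ∑ v : {v : V // G.degree v ≠ 1}, (if v.1 = x then 1 else 0) * β v := by
    intro x hx hx'
    have t : β ⟨r', hr'⟩ = ∑ v, (if v = ⟨r', hr'⟩ then 1 else 0) * β v := by simp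
    rw [hg, hg, t, add_assoc, add_sub_assoc]
    congr 1
    · refine Finset.sum_congr rfl fun v _ => ?_
      simp [cvec, hA]
    · rw [← Finset.sum_add_distrib, ← Finset.sum_sub_distrib]
      refine Finset.sum_congr rfl fun v _ => ?_
      by_cases hv : v.1 = r'
      · have hv' : v = ⟨r', hr'⟩ := Subtype.ext hv
        have hd := h.depth x hx
        subst hv'
        simp [cvec, ← hd, hx'.symm]
        ring
      · have hv' : v ≠ ⟨r', hr'⟩ := fun e => hv (congrArg Subtype.val e)
        simp only [cvec, hv, hv', if_false, Sym2.mem_iff, forall_eq_or_imp, forall_eq, hA,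
          not_false_iff, true_and]
        rw [anc_iff (x := x)]
        by_cases hvx : v.1 = x
        · have := h.not_anc_parent hx
          simp [hvx, this]
        · simp [hvx]
  have hlr' : l ≠ r' := fun e => hr' (e ▸ hl)
  have hb0 : β ⟨r', hr'⟩ = 0 := by
    have := step l hlr hlr'
    rw [h2, h1 _ (hpar l hlr hlr').2, Finset.sum_eq_zero] at this
    · simpa using this.symm
    · intro v _
      have : v.1 ≠ l := fun e => v.2 (e ▸ hl)
      simp [this]
  have hb : ∀ v, β v = 0 := by
    intro v
    by_cases hv : v.1 = r'
    · have hv' : v = ⟨r', hr'⟩ := Subtype.ext hv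
      rw [hv', hb0]
    · have := step v (hI v) hv
      rw [h1 _ v.2, h1 _ (hpar v (hI v) hv).2, hb0] at this
      simpa [← Subtype.ext_iff] using this
  have hg' : ∀ s, g s = ∑ v, (cvec G p r' s (Sum.inl v) : K) * α v := by
    intro s
    rw [hg]; simp [hb]
  have ha0 : α ⟨r', hr'⟩ = 0 := by
    have := h1 r' hr'
    rw [hg'] at this
    rw [← this]
    have t : α ⟨r', hr'⟩ = ∑ v, (if v = ⟨r', hr'⟩ then 1 else 0) * α v := by simp
    rw [t]
    refine Finset.sum_congr rfl fun v _ => ?_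
    simp [cvec, hA, Subtype.ext_iff]
  have hH : ∀ w, G.degree w ≠ 1 → ∑ v : {v : V // G.degree v ≠ 1},
      (if Anc p v.1 w then 1 else 0) * α v = 0 := by
    intro w hw
    by_cases hwr : w = r'
    · subst hwr
      refine Eq.trans ?_ ha0
      have t : α ⟨w, hr'⟩ = ∑ v, (if v = ⟨w, hr'⟩ then 1 else 0) * α v := by simp
      rw [t]
      refine Finset.sum_congr rfl fun v _ => ?_
      rw [anc_iff, hrr]
      simp [hA, Subtype.ext_iff]
    · refine Eq.trans ?_ (h3 w hw hwr)
      rw [hg']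
      refine Finset.sum_congr rfl fun v _ => ?_
      have hw' : w ≠ r := fun e => hw (by rw [e, hr])
      by_cases hv : v.1 = r'
      · simp [cvec, hv, htop w hw']
      · simp only [cvec, hv, if_false, Sym2.mem_iff, forall_eq_or_imp, forall_eq]
        have : (Anc p v.1 w ∧ Anc p v.1 (c w)) ↔ Anc p v.1 w :=
          ⟨fun a => a.1, fun a => ⟨a, anc_iff.2 (Or.inr (by rw [hcc w hw]; exact a))⟩⟩
        simp [this]
  refine ⟨?_, funext hb⟩
  funext v
  by_cases hv : v.1 = r'
  · have hv' : v = ⟨r', hr'⟩ := Subtype.ext hv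
    rw [hv', ha0]; rfl
  · have e1 := hH v v.2
    have e2 := hH (p v) (hpar v (hI v) hv).2
    have t : α v = ∑ u, (if u = v then 1 else 0) * α u := by simp
    have e3 : ∑ u : {v : V // G.degree v ≠ 1}, (if Anc p u.1 v.1 then 1 else 0) * α u =
        ∑ u : {v : V // G.degree v ≠ 1}, (if Anc p u.1 (p v.1) then 1 else 0) * α u + α v := by
      rw [t, ← Finset.sum_add_distrib]
      refine Finset.sum_congr rfl fun u _ => ?_
      rw [anc_iff (x := v.1)]
      by_cases huv : u = v
      · have := h.not_anc_parent (hI v)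
        simp [huv, this]
      · have : u.1 ≠ v.1 := fun e => huv (Subtype.ext e)
        simp [huv, this]
    rw [e1, e2] at e3
    simpa using e3.symm

theorem exists_basis_max4Matrix {V : Type*} [Fintype V] [DecidableEq V]
    (G : SimpleGraph V) [DecidableRel G.Adj] (hT : G.IsTree) (n p : ℕ)
    (hn : Fintype.card V = n) (hn3 : 3 ≤ n)
    (hp : (Finset.univ.filter fun v : V => G.degree v = 1).card = p) :
    ∃ B : Finset {s : Sym2 V // ¬ s.IsDiag},
      B.card = 2 * (n - p) ∧
      LinearIndependent ℚ (fun b : ↥B => max4Matrix G b.1) ∧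
      Submodule.span ℚ (Set.range (fun b : ↥B => max4Matrix G b.1)) =
        Submodule.span ℚ (Set.range (fun s => max4Matrix G s)) ∧
      ((max4Matrix G).submatrix (fun b : ↥B => b.1) (fun b : ↥B => b.1)).det =
        (-1 : ℚ) ^ (n - p) * 2 ^ (2 * (n - p - 1)) := by
  have : Nontrivial V := Fintype.one_lt_card_iff_nontrivial.1 (by omega)
  obtain ⟨r, l, hrl, hr, hl⟩ := hT.exists_ne_and_degree_eq_one
  obtain ⟨q, h⟩ := exists_isParent G hT r
  obtain ⟨r', hr'r, hqr', hr', htop, hpar⟩ := h.exists_top hr (by omega)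
  have hch : ∀ v, ∃ c, G.degree v ≠ 1 → c ≠ r ∧ q c = v := by
    intro v
    by_cases hv : G.degree v = 1
    · exact ⟨v, fun a => absurd hv a⟩
    · obtain ⟨c, hc⟩ := h.exists_child hv (fun e => hv (by rw [e, hr]))
      exact ⟨c, fun _ => hc⟩
  choose c hc using hch
  have hcardI : Fintype.card {v : V // G.degree v ≠ 1} = n - p := by
    rw [Fintype.card_subtype_compl, hn, Fintype.card_subtype, hp]
  have hI : ∀ v : {v : V // G.degree v ≠ 1}, v.1 ≠ r := fun v e => v.2 (by rw [e, hr])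
  let φ : {v : V // G.degree v ≠ 1} ⊕ {v : V // G.degree v ≠ 1} → {s : Sym2 V // ¬ s.IsDiag} :=
    Sum.elim (fun w => ⟨s(r, w.1), by simpa using (hI w).symm⟩)
      (fun v => if v.1 = r' then ⟨s(r, l), by simpa using hrl⟩ else
        ⟨s(v.1, c v.1), by
          have h1 := hc v.1 v.2
          have h2 := h.parent_ne h1.1
          rw [h1.2] at h2
          simpa using h2⟩)
  let W : Matrix {v : V // G.degree v ≠ 1} {v : V // G.degree v ≠ 1} ℚ :=
    Matrix.diagonal fun v => if v.1 = r' then 1 else 2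
  have hW : W.det = 2 ^ (n - p - 1) := by
    rw [Matrix.det_diagonal, ← Finset.mul_prod_erase _ _ (Finset.mem_univ ⟨r', hr'⟩)]
    rw [Finset.prod_congr rfl (g := fun _ => (2 : ℚ))]
    · simp [Finset.card_erase_of_mem, hcardI]
    · intro v hv
      have : v.1 ≠ r' := fun e => (Finset.ne_of_mem_erase hv) (Subtype.ext e)
      simp [this]
  have hD : (Matrix.fromBlocks 0 W W 0).det = (-1 : ℚ) ^ (n - p) * 2 ^ (2 * (n - p - 1)) := by
    rw [det_antidiag, hW, hcardI, ← pow_mul, mul_comm 2]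
  let C : Matrix {s : Sym2 V // ¬ s.IsDiag}
      ({v : V // G.degree v ≠ 1} ⊕ {v : V // G.degree v ≠ 1}) ℚ :=
    fun s j => (cvec G q r' s.1 j : ℚ)
  have hM : max4Matrix G = C * Matrix.fromBlocks 0 W W 0 * C.transpose := by
    ext s t
    have e := max4Sym2_eq h hT.connected hr hr' htop s.1 t.1 s.2 t.2
    have e' : max4Matrix G s t = ((max4Sym2 G s.1 t.1 : ℤ) : ℚ) := by simp [max4Matrix]
    rw [e', e]
    have hCe : ∀ s j, C s j = (cvec G q r' s.1 j : ℚ) := fun _ _ => rfl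
    have hWe : ∀ u v, W u v = if u = v then (if u.1 = r' then 1 else 2) else 0 :=
      fun u v => Matrix.diagonal_apply _ u v
    simp only [Fintype.sum_sum_type, Matrix.mul_apply, Matrix.fromBlocks_apply₁₁,
      Matrix.fromBlocks_apply₁₂, Matrix.fromBlocks_apply₂₁, Matrix.fromBlocks_apply₂₂,
      Matrix.transpose_apply, Matrix.zero_apply, mul_zero, Finset.sum_const_zero, zero_add,
      add_zero, hWe, mul_ite, Finset.sum_ite_eq', Finset.mem_univ, if_true, hCe]
    rw [← Finset.sum_add_distrib]
    push_cast
    refine Finset.sum_congr rfl fun v _ => ?_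
    split_ifs <;> ring
  have hC : (C.submatrix φ id).det ^ 2 = 1 := by
    let CZ : Matrix ({v : V // G.degree v ≠ 1} ⊕ {v : V // G.degree v ≠ 1})
      ({v : V // G.degree v ≠ 1} ⊕ {v : V // G.degree v ≠ 1}) ℤ := fun i j => cvec G q r' (φ i).1 j
    have e1 : C.submatrix φ id = CZ.map (Int.cast : ℤ → ℚ) := rfl
    have e2 : CZ.det ^ 2 = 1 := by
      apply det_sq_of_inj
      intro k hk v hv
      have hm : ∀ i, ∑ j, ((cvec G q r' (φ i).1 j : ℤ) : ZMod k) * v j = 0 :=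
        fun i => congrFun hv i
      have key := inj_aux h hr hr' hqr' htop hpar hl hrl.symm c (fun v hv => (hc v hv).2)
        (fun i => v (Sum.inl i)) (fun i => v (Sum.inr i)) _ (fun s => rfl) ?_ ?_ ?_
      · funext i
        cases i with
        | inl i => exact congrFun key.1 i
        | inr i => exact congrFun key.2 i
      · intro w hw
        have := hm (Sum.inl ⟨w, hw⟩)
        simpa [φ] using this
      · have := hm (Sum.inr ⟨r', hr'⟩)
        simpa [φ] using this
      · intro w hw hwr
        have := hm (Sum.inr ⟨w, hw⟩)
        simpa [φ, hwr] using this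
    have e3 : (CZ.map (Int.cast : ℤ → ℚ)).det = ((CZ.det : ℤ) : ℚ) := (Int.cast_det CZ).symm
    rw [e1, e3]
    exact_mod_cast e2
  have hD0 : (Matrix.fromBlocks 0 W W 0).det ≠ 0 := by
    rw [hD]
    exact mul_ne_zero (pow_ne_zero _ (by norm_num)) (pow_ne_zero _ (by norm_num))
  obtain ⟨B, hB1, hB2, hB3, hB4⟩ := exists_basis_aux _ φ C _ hM hD0 hC
  refine ⟨B, ?_, hB2, hB3, hB4.trans hD⟩
  rw [hB1, Fintype.card_sum, hcardI]
  omega
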